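/- For every α with −1 < α < 1 and all y, z > 0 with y ≠ z: ∫_{S²×S²} |√(2y)ω − √(2z)ω_*|^{−(3+α)} dω dω_* = 4π² · [ (√y + √z)^{1+α} − |√y − √z|^{1+α} ] / [ 2^{(1+α)/2} (1+α) √(yz) · |y − z|^{1+α} ]. -/

import Mathlib

/-!
For a fixed `ω`, the integrand depends on `ω'` only through `t = ⟪ω, ω'⟫`, because
`‖a ω - b ω'‖² = a² + b² - 2abt`. By Archimedes' hat-box theorem (`lintegral_sphere_inner`) the
inner integral equals `2π ∫_{-1}^{1} (a² + b² - 2abt)^(-(3+α)/2) dt`, which has an elementary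
antiderivative (`lintegral_pow_segment`). The result does not depend on `ω`, so the outer integral
multiplies it by the area `4π`; it remains to put `a = √(2y)`, `b = √(2z)` and to use
`|y - z| = |√y - √z| (√y + √z)`.

The hat-box theorem is obtained by integrating `f(⟪ω, x⟫ / ‖x‖) h(‖x‖)` over `ℝ³` in two ways: in
polar coordinates (`lintegral_polar_E3`), and, after a rotation taking `ω` to a coordinate axis, in
cylindrical coordinates (`lintegral_cyl`).
-/

open MeasureTheory Real
open scoped RealInnerProductSpace ENNReal

noncomputable section

abbrev E3 := EuclideanSpace ℝ (Fin 3)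

/-- The surface measure on the unit sphere `S² ⊂ ℝ³` (total mass `4π`). -/
noncomputable def sphM : Measure (Metric.sphere (0 : E3) 1) :=
  (volume : Measure E3).toSphere

/-- Polar coordinates in `ℝ³` for a function that is the product of a function of the angle to `ω`
and a function of the radius. -/
theorem lintegral_polar_E3 (ω : Metric.sphere (0 : E3) 1) {f h : ℝ → ℝ≥0∞} (hf : Measurable f)
    (hh : Measurable h) :
    ∫⁻ x : E3, f (⟪(ω : E3), x⟫ / ‖x‖) * h ‖x‖ =
      (∫⁻ ω' : Metric.sphere (0 : E3) 1, f ⟪(ω : E3), (ω' : E3)⟫ ∂sphM) *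
        ∫⁻ r in Set.Ioi (0 : ℝ), ENNReal.ofReal (r ^ 2) * h r := by
  have key := (volume : Measure E3).measurePreserving_homeomorphUnitSphereProd
  have hcomp := key.lintegral_comp_emb (Homeomorph.measurableEmbedding _)
    (fun p : Metric.sphere (0 : E3) 1 × Set.Ioi (0 : ℝ) => f ⟪(ω : E3), (p.1 : E3)⟫ * h p.2)
  have h1 : Measurable fun ω' : Metric.sphere (0 : E3) 1 => f ⟪(ω : E3), (ω' : E3)⟫ := by
    apply hf.comp; fun_prop
  have h2 : Measurable fun r : Set.Ioi (0 : ℝ) => h r := hh.comp measurable_subtype_coe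
  rw [lintegral_prod_mul h1.aemeasurable h2.aemeasurable] at hcomp
  have hdim : Module.finrank ℝ E3 - 1 = 2 := by simp
  have hr : ∫⁻ r : Set.Ioi (0 : ℝ), h r ∂(Measure.volumeIoiPow 2) =
      ∫⁻ r in Set.Ioi (0 : ℝ), ENNReal.ofReal (r ^ 2) * h r := by
    rw [Measure.volumeIoiPow, lintegral_withDensity_eq_lintegral_mul _ (by fun_prop) h2]
    simp only [Pi.mul_apply]
    exact lintegral_subtype_comap measurableSet_Ioi (fun r : ℝ => ENNReal.ofReal (r ^ 2) * h r)
  rw [hdim, hr] at hcomp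
  rw [sphM, ← hcomp]
  have hrestr : ∀ k : E3 → ℝ≥0∞, ∫⁻ x, k x = ∫⁻ x in {0}ᶜ, k x := fun k => by
    rw [restrict_compl_singleton]
  rw [hrestr, ← lintegral_subtype_comap (measurableSet_singleton _).compl]
  refine lintegral_congr fun x => ?_
  simp [inner_smul_right, div_eq_inv_mul]

/-- Polar coordinates in the plane for a radial function, written as a function of the squared
radius. -/
theorem lintegral_radial_plane {g : ℝ → ℝ≥0∞} (hg : Measurable g) :
    ∫⁻ p : ℝ × ℝ, g (p.1 ^ 2 + p.2 ^ 2) =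
      ENNReal.ofReal (2 * π) * ∫⁻ ρ in Set.Ioi (0 : ℝ), ENNReal.ofReal ρ * g (ρ ^ 2) := by
  rw [← lintegral_comp_polarCoord_symm]
  have e : ∀ p : ℝ × ℝ, ENNReal.ofReal p.1 • g ((polarCoord.symm p).1 ^ 2 +
      (polarCoord.symm p).2 ^ 2) = (ENNReal.ofReal p.1 * g (p.1 ^ 2)) * 1 := by
    intro p
    simp only [polarCoord_symm_apply, smul_eq_mul, mul_one]
    congr 2
    linear_combination p.1 ^ 2 * Real.sin_sq_add_cos_sq p.2
  simp_rw [e]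
  rw [polarCoord_target, Measure.volume_eq_prod, ← Measure.prod_restrict,
    lintegral_prod_mul (f := fun ρ : ℝ => ENNReal.ofReal ρ * g (ρ ^ 2)) (g := fun _ => 1)
      (by fun_prop) (by fun_prop), mul_comm]
  simp only [lintegral_const, one_mul, Measure.restrict_apply MeasurableSet.univ, Set.univ_inter,
    Real.volume_Ioo]
  ring_nf

/-- The substitution `r = √(ρ² + z²)`, for which `r dr = ρ dρ`. -/
theorem lintegral_shift (z : ℝ) (G : ℝ → ℝ≥0∞) :
    ∫⁻ ρ in Set.Ioi (0 : ℝ), ENNReal.ofReal ρ * G (√(ρ ^ 2 + z ^ 2)) =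
      ∫⁻ r in Set.Ioi |z|, ENNReal.ofReal r * G r := by
  have himg : (fun ρ : ℝ => √(ρ ^ 2 + z ^ 2)) '' Set.Ioi 0 = Set.Ioi |z| := by
    ext r
    simp only [Set.mem_image, Set.mem_Ioi]
    constructor
    · rintro ⟨ρ, hρ, rfl⟩
      apply Real.lt_sqrt_of_sq_lt
      rw [sq_abs]; have := pow_pos hρ 2; linarith
    · intro hr
      have hz := abs_nonneg z
      have hzr : 0 < r ^ 2 - z ^ 2 := by rw [← sq_abs z]; nlinarith
      refine ⟨√(r ^ 2 - z ^ 2), Real.sqrt_pos.2 hzr, ?_⟩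
      rw [Real.sq_sqrt hzr.le, sub_add_cancel, Real.sqrt_sq (by linarith)]
  have hpos : ∀ ρ ∈ Set.Ioi (0 : ℝ), 0 < ρ ^ 2 + z ^ 2 := fun ρ hρ => by
    have : 0 < ρ := hρ
    positivity
  rw [← himg, lintegral_image_eq_lintegral_abs_deriv_mul measurableSet_Ioi
    (f' := fun ρ => ρ / √(ρ ^ 2 + z ^ 2))]
  · refine setLIntegral_congr_fun measurableSet_Ioi fun ρ hρ => ?_
    have h0 := Real.sqrt_pos.2 (hpos ρ hρ)
    have hρ' : 0 < ρ := hρ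
    rw [← mul_assoc, ← ENNReal.ofReal_mul (abs_nonneg _), abs_of_pos (by positivity),
      div_mul_cancel₀ _ h0.ne']
  · intro ρ hρ
    have := ((((hasDerivAt_id ρ).pow 2).add_const (z ^ 2)).sqrt (hpos ρ hρ).ne').hasDerivWithinAt
      (s := Set.Ioi 0)
    refine this.congr_deriv ?_
    simp; field_simp
  · intro a ha b hb hab
    have ha' : 0 < a := ha
    have hb' : 0 < b := hb
    beta_reduce at hab
    rw [Real.sqrt_inj (hpos a ha).le (hpos b hb).le] at hab
    exact (pow_left_inj₀ ha'.le hb'.le two_ne_zero).1 (by linarith)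

/-- Cylindrical coordinates around the `0`-th axis, with the distance `ρ` to the axis replaced by
the distance `r = √(ρ² + z²)` to the origin. -/
theorem lintegral_cyl {F : ℝ → ℝ → ℝ≥0∞} (hF : Measurable (Function.uncurry F)) :
    ∫⁻ x : E3, F (x 0) ‖x‖ =
      ENNReal.ofReal (2 * π) * ∫⁻ z : ℝ, ∫⁻ r in Set.Ioi |z|, ENNReal.ofReal r * F z r := by
  have hpi := PiLp.volume_preserving_toLp (Fin 3)
  rw [← hpi.lintegral_comp_emb (MeasurableEquiv.toLp 2 _).measurableEmbedding]
  have hsucc := (volume_preserving_piFinSuccAbove (fun _ : Fin 3 => ℝ) 0).symm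
  rw [← hsucc.lintegral_comp_emb (MeasurableEquiv.measurableEmbedding _)]
  have e : ∀ p : ℝ × (Fin 2 → ℝ),
      F ((WithLp.toLp 2 ((MeasurableEquiv.piFinSuccAbove (fun _ : Fin 3 => ℝ) 0).symm p) : E3) 0)
        ‖(WithLp.toLp 2 ((MeasurableEquiv.piFinSuccAbove (fun _ : Fin 3 => ℝ) 0).symm p) : E3)‖ =
      F p.1 (√((p.2 0 ^ 2 + p.2 1 ^ 2) + p.1 ^ 2)) := by
    intro p
    simp [EuclideanSpace.norm_eq, Fin.sum_univ_three, MeasurableEquiv.piFinSuccAbove]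
    rw [show (Fin.cons p.1 p.2 : Fin 3 → ℝ) 2 = p.2 1 from rfl, add_assoc, add_comm (p.1 ^ 2)]
  simp_rw [e]
  rw [Measure.volume_eq_prod, lintegral_prod _ (by
    have : Measurable fun p : ℝ × (Fin 2 → ℝ) => (p.1, √((p.2 0 ^ 2 + p.2 1 ^ 2) + p.1 ^ 2)) := by
      fun_prop
    exact (hF.comp this).aemeasurable)]
  rw [← lintegral_const_mul']
  swap; · exact ENNReal.ofReal_ne_top
  refine lintegral_congr fun z => ?_
  rw [← (volume_preserving_finTwoArrow ℝ).symm.lintegral_comp_emb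
    (MeasurableEquiv.measurableEmbedding _)]
  have hz : Measurable (F z) := hF.comp (measurable_const.prodMk measurable_id)
  have := lintegral_radial_plane (g := fun s => F z (√(s + z ^ 2))) (hz.comp (by fun_prop))
  rw [← lintegral_shift, ← this]
  refine lintegral_congr fun p => ?_
  simp [MeasurableEquiv.finTwoArrow]

theorem lintegral_scale {r : ℝ} (hr : 0 < r) (k : ℝ → ℝ≥0∞) :
    ∫⁻ z in Set.Ioo (-r) r, k (z / r) =
      ENNReal.ofReal r * ∫⁻ t in Set.Ioo (-1 : ℝ) 1, k t := by
  have himg : (fun t : ℝ => r * t) '' Set.Ioo (-1) 1 = Set.Ioo (-r) r := by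
    rw [Set.image_mul_left_Ioo hr]; simp
  rw [← himg, lintegral_image_eq_lintegral_abs_deriv_mul measurableSet_Ioo (f' := fun _ => r)
    (fun t _ => by simpa using ((hasDerivAt_id t).const_mul r).hasDerivWithinAt)
    (mul_right_injective₀ hr.ne').injOn, ← lintegral_const_mul' _ _ ENNReal.ofReal_ne_top]
  refine lintegral_congr fun t => ?_
  rw [abs_of_pos hr, mul_div_cancel_left₀ _ hr.ne']

/-- Archimedes' hat-box theorem: for a fixed unit vector `ω`, the surface measure of `S²` is pushed
forward by `ω' ↦ ⟪ω, ω'⟫` to `2π` times Lebesgue measure on `(-1, 1)`. -/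
theorem lintegral_sphere_inner (ω : Metric.sphere (0 : E3) 1) {f : ℝ → ℝ≥0∞}
    (hf : Measurable f) :
    ∫⁻ ω' : Metric.sphere (0 : E3) 1, f ⟪(ω : E3), (ω' : E3)⟫ ∂sphM =
      ENNReal.ofReal (2 * π) * ∫⁻ t in Set.Ioo (-1 : ℝ) 1, f t := by
  -- The radial weight `h(r) = r⁻²` on `(0, 1)` makes the radial factor `∫ r² h(r) dr` equal to `1`.
  set h : ℝ → ℝ≥0∞ := (Set.Ioo (0 : ℝ) 1).indicator fun r => ENNReal.ofReal (r ^ 2)⁻¹ with hh_def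
  have hh : Measurable h := Measurable.indicator (by fun_prop) measurableSet_Ioo
  have hone : ∫⁻ r in Set.Ioi (0 : ℝ), ENNReal.ofReal (r ^ 2) * h r = 1 := by
    have e : ∀ r : ℝ, ENNReal.ofReal (r ^ 2) * h r = (Set.Ioo (0 : ℝ) 1).indicator 1 r := by
      intro r
      by_cases hr : r ∈ Set.Ioo (0 : ℝ) 1
      · have : 0 < r := hr.1
        simp only [hh_def, Set.indicator_of_mem hr, Pi.one_apply]
        rw [← ENNReal.ofReal_mul (by positivity), mul_inv_cancel₀ (by positivity)]
        simp
      · simp [hh_def, Set.indicator_of_notMem hr]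
    simp_rw [e]
    rw [lintegral_indicator_one measurableSet_Ioo, Measure.restrict_apply measurableSet_Ioo,
      Set.inter_eq_left.2 Set.Ioo_subset_Ioi_self]
    simp
  have hpolar := lintegral_polar_E3 ω hf hh
  rw [hone, mul_one] at hpolar
  rw [← hpolar]
  -- An orthonormal basis starting with `ω` rotates `ω` to the `0`-th axis.
  obtain ⟨b, hb⟩ : ∃ b : OrthonormalBasis (Fin 3) ℝ E3, b 0 = ω := by
    have horth : Orthonormal ℝ (Set.domRestrict ({0} : Set (Fin 3)) fun _ => (ω : E3)) := by
      rw [orthonormal_iff_ite]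
      rintro ⟨i, hi⟩ ⟨j, hj⟩
      simp only [Set.mem_singleton_iff] at hi hj
      subst hi hj
      simp
    obtain ⟨b, hb⟩ := horth.exists_orthonormalBasis_extension_of_card_eq (by simp)
    exact ⟨b, hb 0 rfl⟩
  have hrot : ∫⁻ x : E3, f (⟪(ω : E3), x⟫ / ‖x‖) * h ‖x‖ =
      ∫⁻ x : E3, f (x 0 / ‖x‖) * h ‖x‖ := by
    rw [← b.measurePreserving_repr.lintegral_comp_emb
      b.repr.toHomeomorph.measurableEmbedding (fun x : E3 => f (x 0 / ‖x‖) * h ‖x‖)]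
    refine lintegral_congr fun x => ?_
    rw [b.repr_apply_apply, hb, LinearIsometryEquiv.norm_map]
  have hF : Measurable (Function.uncurry fun z r : ℝ => f (z / r) * h r) :=
    (hf.comp (by fun_prop : Measurable fun p : ℝ × ℝ => p.1 / p.2)).mul (hh.comp measurable_snd)
  rw [hrot, lintegral_cyl hF]
  congr 1
  have hind : ∀ z : ℝ, ∫⁻ r in Set.Ioi |z|, ENNReal.ofReal r * (f (z / r) * h r) =
      ∫⁻ r, {p : ℝ × ℝ | |p.1| < p.2}.indicator
        (fun p => ENNReal.ofReal p.2 * (f (p.1 / p.2) * h p.2)) (z, r) := by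
    intro z
    rw [← lintegral_indicator measurableSet_Ioi]
    rfl
  -- Exchange the integrals over `z` and `r`, so that `z = r t` can be substituted for fixed `r`.
  simp_rw [hind]
  rw [lintegral_lintegral_swap]
  swap
  · apply Measurable.aemeasurable
    apply Measurable.indicator
    · exact (by fun_prop : Measurable fun p : ℝ × ℝ => ENNReal.ofReal p.2).mul hF
    · exact measurableSet_lt (by fun_prop) measurable_snd
  have hslice : ∀ r : ℝ, ∫⁻ z, {p : ℝ × ℝ | |p.1| < p.2}.indicator
        (fun p => ENNReal.ofReal p.2 * (f (p.1 / p.2) * h p.2)) (z, r) =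
      (Set.Ioi (0 : ℝ)).indicator (fun r => ENNReal.ofReal (r ^ 2) * h r) r *
        ∫⁻ t in Set.Ioo (-1 : ℝ) 1, f t := by
    intro r
    have e : ∀ z : ℝ, {p : ℝ × ℝ | |p.1| < p.2}.indicator
        (fun p => ENNReal.ofReal p.2 * (f (p.1 / p.2) * h p.2)) (z, r) =
        (Set.Ioo (-r) r).indicator (fun z => (ENNReal.ofReal r * h r) * f (z / r)) z := by
      intro z
      simp only [Set.indicator_apply, Set.mem_ofPred_eq, Set.mem_Ioo, abs_lt]
      split_ifs
      · ring
      · rfl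
    simp_rw [e]
    rw [lintegral_indicator measurableSet_Ioo]
    rcases le_or_gt r 0 with hr | hr
    · rw [Set.Ioo_eq_empty (by linarith), Set.indicator_of_notMem (by simpa using hr)]
      simp
    · rw [lintegral_const_mul _ (by fun_prop), lintegral_scale hr,
        Set.indicator_of_mem (Set.mem_Ioi.2 hr), pow_two, ENNReal.ofReal_mul hr.le]
      ring
  simp_rw [hslice]
  rw [lintegral_mul_const _ (Measurable.indicator (by fun_prop) measurableSet_Ioi),
    lintegral_indicator measurableSet_Ioi, hone, one_mul]

theorem sphM_univ : sphM Set.univ = ENNReal.ofReal (4 * π) := by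
  have := lintegral_sphere_inner ⟨EuclideanSpace.single 0 1, by simp⟩
    (f := fun _ => 1) measurable_const
  simp only [lintegral_const, one_mul, Measure.restrict_apply MeasurableSet.univ, Set.univ_inter,
    Real.volume_Ioo] at this
  rw [this, ← ENNReal.ofReal_mul (by positivity)]
  ring_nf

/-- The integral over the height `t`, by the antiderivative
`(a² + b² - 2abt)^(-(1+α)/2) / (ab(1+α))`. Since `a ≠ b`, the base stays positive on `[-1, 1]`. -/
theorem lintegral_pow_segment {a b α : ℝ} (ha : 0 < a) (hb : 0 < b) (hab : a ≠ b)
    (hα : -1 < α) :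
    ∫⁻ t in Set.Ioo (-1 : ℝ) 1,
        ENNReal.ofReal ((a ^ 2 + b ^ 2 - 2 * a * b * t) ^ (-(3 + α) / 2)) =
      ENNReal.ofReal ((|a - b| ^ (-(1 + α)) - (a + b) ^ (-(1 + α))) / (a * b * (1 + α))) := by
  have hpos : ∀ t ∈ Set.Icc (-1 : ℝ) 1, 0 < a ^ 2 + b ^ 2 - 2 * a * b * t := by
    intro t ht
    have h1 : 0 < (a - b) ^ 2 := by have := sub_ne_zero.2 hab; positivity
    nlinarith [mul_pos ha hb, ht.2]
  have hcont : ContinuousOn (fun t : ℝ => (a ^ 2 + b ^ 2 - 2 * a * b * t) ^ (-(3 + α) / 2))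
      (Set.uIcc (-1) 1) := by
    rw [Set.uIcc_of_le (by norm_num)]
    exact ContinuousOn.rpow_const (by fun_prop) fun t ht => Or.inl (hpos t ht).ne'
  have hint := hcont.intervalIntegrable (μ := volume)
  have hα' : 1 + α ≠ 0 := by linarith
  have hftc : ∫ t in (-1 : ℝ)..1, (a ^ 2 + b ^ 2 - 2 * a * b * t) ^ (-(3 + α) / 2) =
      (|a - b| ^ (-(1 + α)) - (a + b) ^ (-(1 + α))) / (a * b * (1 + α)) := by
    rw [intervalIntegral.integral_eq_sub_of_hasDerivAt
      (f := fun t => (a ^ 2 + b ^ 2 - 2 * a * b * t) ^ (-(1 + α) / 2) / (a * b * (1 + α)))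
      (fun t ht => ?_) hint]
    · have e1 : a ^ 2 + b ^ 2 - 2 * a * b * 1 = |a - b| ^ (2 : ℝ) := by
        rw [Real.rpow_two, sq_abs]; ring
      have e2 : a ^ 2 + b ^ 2 - 2 * a * b * (-1) = (a + b) ^ (2 : ℝ) := by
        rw [Real.rpow_two]; ring
      rw [e1, e2, ← Real.rpow_mul (abs_nonneg _), ← Real.rpow_mul (by positivity),
        mul_div_cancel₀ _ two_ne_zero, sub_div]
    · rw [Set.uIcc_of_le (by norm_num)] at ht
      have h1 : HasDerivAt (fun t : ℝ => a ^ 2 + b ^ 2 - 2 * a * b * t) (-(2 * a * b)) t := by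
        simpa using ((hasDerivAt_id t).const_mul (2 * a * b)).const_sub (a ^ 2 + b ^ 2)
      refine ((h1.rpow_const (p := -(1 + α) / 2) (Or.inl (hpos t ht).ne')).div_const
        (a * b * (1 + α))).congr_deriv ?_
      rw [show -(1 + α) / 2 - 1 = -(3 + α) / 2 by ring]
      field_simp
  rw [← hftc, intervalIntegral.integral_of_le (by norm_num),
    ofReal_integral_eq_lintegral_ofReal, Measure.restrict_congr_set Ioo_ae_eq_Ioc]
  · exact hint.1
  · filter_upwards [ae_restrict_mem measurableSet_Ioc] with t ht
    exact Real.rpow_nonneg (hpos t ⟨ht.1.le, ht.2⟩).le _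

/-- For every `−1 < α < 1` and all `y, z > 0` with `y ≠ z`,
`∫_{S²×S²} |√(2y)ω − √(2z)ω_*|^{−(3+α)} dω dω_*
  = 4π² [(√y+√z)^{1+α} − |√y−√z|^{1+α}] / [2^{(1+α)/2}(1+α)√(yz)|y−z|^{1+α}]`. -/
theorem stmt9 (α : ℝ) (hα₁ : -1 < α) (hα₂ : α < 1)
    (y z : ℝ) (hy : 0 < y) (hz : 0 < z) (hyz : y ≠ z) :
    (∫⁻ ω : Metric.sphere (0 : E3) 1, ∫⁻ ω' : Metric.sphere (0 : E3) 1,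
        ENNReal.ofReal
          (‖Real.sqrt (2 * y) • (ω : E3) - Real.sqrt (2 * z) • (ω' : E3)‖ ^ (-((3 : ℝ) + α)))
      ∂sphM ∂sphM) =
    ENNReal.ofReal (4 * π ^ 2 *
      (((Real.sqrt y + Real.sqrt z) ^ ((1 : ℝ) + α) -
          |Real.sqrt y - Real.sqrt z| ^ ((1 : ℝ) + α)) /
        ((2 : ℝ) ^ (((1 : ℝ) + α) / 2) * (1 + α) * Real.sqrt (y * z) *
          |y - z| ^ ((1 : ℝ) + α)))) := by
  set a := √(2 * y) with ha_def
  set b := √(2 * z) with hb_def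
  have ha : 0 < a := Real.sqrt_pos.2 (by positivity)
  have hb : 0 < b := Real.sqrt_pos.2 (by positivity)
  have hab : a ≠ b := fun h => hyz (by
    rw [ha_def, hb_def, Real.sqrt_inj (by positivity) (by positivity)] at h; linarith)
  have hnorm : ∀ ω ω' : Metric.sphere (0 : E3) 1,
      ‖a • (ω : E3) - b • (ω' : E3)‖ ^ (-((3 : ℝ) + α)) =
        (a ^ 2 + b ^ 2 - 2 * a * b * ⟪(ω : E3), (ω' : E3)⟫) ^ (-(3 + α) / 2) := by
    intro ω ω'
    have hsq : a ^ 2 + b ^ 2 - 2 * a * b * ⟪(ω : E3), (ω' : E3)⟫ =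
        ‖a • (ω : E3) - b • (ω' : E3)‖ ^ (2 : ℝ) := by
      rw [Real.rpow_two, norm_sub_sq_real]
      simp [norm_smul, inner_smul_left, inner_smul_right]
      ring
    rw [hsq, ← Real.rpow_mul (norm_nonneg _), mul_div_cancel₀ _ two_ne_zero]
  have hinner : ∀ ω : Metric.sphere (0 : E3) 1, ∫⁻ ω' : Metric.sphere (0 : E3) 1,
      ENNReal.ofReal (‖a • (ω : E3) - b • (ω' : E3)‖ ^ (-((3 : ℝ) + α))) ∂sphM =
      ENNReal.ofReal (2 * π) *
        ENNReal.ofReal ((|a - b| ^ (-(1 + α)) - (a + b) ^ (-(1 + α))) / (a * b * (1 + α))) := by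
    intro ω
    simp_rw [hnorm]
    rw [lintegral_sphere_inner ω (f := fun t => ENNReal.ofReal
      ((a ^ 2 + b ^ 2 - 2 * a * b * t) ^ (-(3 + α) / 2))) (by fun_prop),
      lintegral_pow_segment ha hb hab hα₁]
  simp_rw [hinner]
  rw [lintegral_const, sphM_univ, mul_right_comm, ← ENNReal.ofReal_mul (by positivity),
    ← ENNReal.ofReal_mul (by positivity)]
  congr 1
  have hs2 : (0 : ℝ) < √2 := by positivity
  have hsy := Real.sqrt_pos.2 hy
  have hsz := Real.sqrt_pos.2 hz
  have hsub : 0 < |√y - √z| := by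
    rw [abs_pos, sub_ne_zero]
    exact fun h => hyz ((Real.sqrt_inj hy.le hz.le).1 h)
  have ha' : a = √2 * √y := Real.sqrt_mul (by norm_num) _
  have hb' : b = √2 * √z := Real.sqrt_mul (by norm_num) _
  have hdiff : |a - b| = √2 * |√y - √z| := by
    rw [ha', hb', ← mul_sub, abs_mul, abs_of_pos hs2]
  have hsum : a + b = √2 * (√y + √z) := by rw [ha', hb', mul_add]
  have hmul : a * b = 2 * √(y * z) := by
    rw [ha', hb', Real.sqrt_mul hy.le]
    linear_combination (√y * √z) * Real.mul_self_sqrt (zero_le_two (α := ℝ))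
  have hfac : |y - z| = |√y - √z| * (√y + √z) := by
    rw [← abs_of_pos (add_pos hsy hsz), ← abs_mul]
    congr 1
    linear_combination -Real.sq_sqrt hy.le + Real.sq_sqrt hz.le
  have htwo : (2 : ℝ) ^ ((1 + α) / 2) = √2 ^ (1 + α) := by
    rw [Real.sqrt_eq_rpow, ← Real.rpow_mul (by norm_num)]
    congr 1; ring
  rw [hdiff, hsum, hmul, hfac, htwo, Real.rpow_neg (by positivity), Real.rpow_neg (by positivity),
    Real.mul_rpow hs2.le hsub.le, Real.mul_rpow hs2.le (by positivity),
    Real.mul_rpow hsub.le (by positivity)]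
  have p1 : 0 < √2 ^ (1 + α) := by positivity
  have p2 : 0 < |√y - √z| ^ (1 + α) := by positivity
  have p3 : 0 < (√y + √z) ^ (1 + α) := by positivity
  have p4 : 0 < √(y * z) := by positivity
  have p5 : 1 + α ≠ 0 := by linarith
  generalize √2 ^ (1 + α) = A at *
  generalize |√y - √z| ^ (1 + α) = B at *
  generalize (√y + √z) ^ (1 + α) = C at *
  field_simp

end
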